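/- Let κ be a regular uncountable cardinal, Γ a chain, G = (ℝ^Γ)_κ, K = ℝ((G))_κ, ι : Γ → G^{<0} an order isomorphism, and log the associated left logarithm on K given by log(t^g) = Σ_γ (−g_γ) t^{ι(γ)}. Then log is a (GA)-left logarithm (i.e., t^g > n·log(t^g) for all n ∈ ℕ and all g ∈ G^{<0}) if and only if ι(min support g) > g for all g ∈ G^{<0}. -/

import Mathlib

open Cardinal Classical

/-- The lexicographic (leading-coefficient) strict order on Hahn series. -/
def hlt {Γ : Type*} [LinearOrder Γ] (f g : HahnSeries Γ ℝ) : Prop :=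
  ∃ a, f.coeff a < g.coeff a ∧ ∀ b, b < a → f.coeff b = g.coeff b

/-- The lexicographic strict order on second-level series (elements of `ℝ((G))_κ`
for `G = (ℝ^Γ)_κ`, represented as real-valued functions on `G = ℝ^Γ`). -/
def hlt2 {Γ : Type*} [LinearOrder Γ] (F F' : HahnSeries Γ ℝ → ℝ) : Prop :=
  ∃ a, F a < F' a ∧ ∀ b, hlt b a → F b = F' b

theorem hlt_iff_toLex_lt {Γ : Type*} [LinearOrder Γ] (f g : HahnSeries Γ ℝ) :
    hlt f g ↔ toLex f < toLex g := by
  rw [HahnSeries.lt_iff]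
  exact exists_congr fun _ => and_comm

theorem hlt_trichotomy {Γ : Type*} [LinearOrder Γ] (f g : HahnSeries Γ ℝ) :
    hlt f g ∨ f = g ∨ hlt g f := by
  simp only [hlt_iff_toLex_lt]
  exact lt_trichotomy (toLex f) (toLex g)

theorem hlt_irrefl {Γ : Type*} [LinearOrder Γ] (f : HahnSeries Γ ℝ) : ¬ hlt f f :=
  fun ⟨_, h, _⟩ => lt_irrefl _ h

/-- **The Main Lemma: growth axiom criterion.**  Let `κ` be regular uncountable, `Γ` a
chain, `G = (ℝ^Γ)_κ`, `K = ℝ((G))_κ`, `ι : Γ → G^{<0}` an order isomorphism, and `log`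
the associated left logarithm `log(t^g) = Σ_γ (−g_γ) t^{ι(γ)}`.  Then `log` is a
(GA)-left logarithm, i.e. `t^g > n·log(t^g)` in `K` for all `n ∈ ℕ` and `g ∈ G^{<0}`
(here `t^g` is the second-level monomial, the indicator of `g`), if and only if
`ι(min support g) > g` for all `g ∈ G^{<0}`. -/
theorem main_lemma_GA_criterion
    (κ : Cardinal) (hreg : κ.IsRegular) (hunc : ℵ₀ < κ)
    (Γ : Type*) [LinearOrder Γ] (ι : Γ → HahnSeries Γ ℝ)
    (hι₁ : ∀ γ, #(ι γ).support < κ ∧ hlt (ι γ) 0)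
    (hι₂ : ∀ γ γ', γ < γ' ↔ hlt (ι γ) (ι γ'))
    (hι₃ : ∀ g : HahnSeries Γ ℝ, #g.support < κ → hlt g 0 → ∃ γ, ι γ = g)
    (L : {g : HahnSeries Γ ℝ // #g.support < κ} → (HahnSeries Γ ℝ → ℝ))
    (hL₁ : ∀ g γ, L g (ι γ) = -(g.1.coeff γ))
    (hL₂ : ∀ g h, h ∉ Set.range ι → L g h = 0) :
    -- (GA): for all n ∈ ℕ and g ∈ G^{<0}, n·log(t^g) < t^g
    (∀ (n : ℕ) (g : {g : HahnSeries Γ ℝ // #g.support < κ}), hlt g.1 0 →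
        hlt2 (fun h => n * L g h) (fun h => if h = g.1 then 1 else 0)) ↔
    -- iff ι(min support g) > g for all g ∈ G^{<0}
    (∀ g : {g : HahnSeries Γ ℝ // #g.support < κ}, hlt g.1 0 →
        ∀ γ₀, g.1.coeff γ₀ ≠ 0 → (∀ γ, g.1.coeff γ ≠ 0 → γ₀ ≤ γ) →
          hlt g.1 (ι γ₀)) := by
  -- the series `L g` vanishes strictly below `ι γ₀` when `g` vanishes strictly below `γ₀`
  have hzero : ∀ (g : {g : HahnSeries Γ ℝ // #g.support < κ}) (γ₀ : Γ),
      (∀ γ, γ < γ₀ → g.1.coeff γ = 0) → ∀ b, hlt b (ι γ₀) → L g b = 0 := by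
    intro g γ₀ hmin b hb
    by_cases hr : b ∈ Set.range ι
    · obtain ⟨γ, rfl⟩ := hr
      rw [hL₁, hmin γ ((hι₂ γ γ₀).2 hb), neg_zero]
    · exact hL₂ g b hr
  constructor
  · intro hGA g hg γ₀ hne hmin
    have hbelow : ∀ γ, γ < γ₀ → g.1.coeff γ = 0 := fun γ hγ =>
      by_contra fun h => (hmin γ h).not_gt hγ
    have hneg : g.1.coeff γ₀ < 0 := by
      obtain ⟨c, hc, hc'⟩ := hg
      rw [HahnSeries.coeff_zero] at hc
      rcases (hmin c hc.ne).lt_or_eq with h | rfl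
      · exact absurd (hc' γ₀ h) hne
      · exact hc
    by_contra hcon
    obtain ⟨n, hn⟩ := exists_nat_gt (1 / -(g.1.coeff γ₀))
    rw [div_lt_iff₀ (neg_pos.2 hneg)] at hn
    obtain ⟨a, ha, ha'⟩ := hGA n g hg
    rcases hlt_trichotomy a (ι γ₀) with h | rfl | h
    · simp only [hzero g γ₀ hbelow a h, mul_zero] at ha
      split_ifs at ha with hag
      · exact hcon (hag ▸ h)
      · exact lt_irrefl _ ha
    · simp only [hL₁] at ha
      split_ifs at ha <;> linarith
    · have h' := ha' _ h
      simp only [hL₁] at h'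
      split_ifs at h' <;> linarith
  · intro h n g hg
    obtain ⟨γ₀, hneg, hbelow⟩ := id hg
    rw [HahnSeries.coeff_zero] at hneg
    have hlt₀ := h g hg γ₀ hneg.ne fun γ hγ => not_lt.1 fun hlt' => hγ (hbelow γ hlt')
    refine ⟨g.1, ?_, fun b hb => ?_⟩
    · simp [hzero g γ₀ hbelow g.1 hlt₀]
    · have hbg : b ≠ g.1 := fun he => hlt_irrefl _ (he ▸ hb)
      have hb₀ : hlt b (ι γ₀) := by
        rw [hlt_iff_toLex_lt] at *
        exact hb.trans hlt₀
      simp [hzero g γ₀ hbelow b hb₀, hbg]
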